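/- Define ψ : R_X × (R_Y)^{r-1} → R_{X̃} by ψ(α, β_1, ..., β_{r-1}) = π^*(α) + ∑_{i=1}^{r-1} i_{E*}( h^{i-1} · π_E^*(β_i) ). Then for all α ∈ R_X and β_1, ..., β_{r-1} ∈ R_Y: (a) π_*(ψ(α, β_1, ..., β_{r-1})) = α, and (b) G_E^{-i}( i_E^*(ψ(α, β_1, ..., β_{r-1})) ) = β_i for every 1 ≤ i ≤ r-1. In other words, the map sending x ∈ R_{X̃} to (π_*(x), G_E^{-1}(i_E^*(x)), ..., G_E^{-(r-1)}(i_E^*(x))) is a left inverse of ψ. -/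

import Mathlib

/-- `Q r j` is the polynomial `P_{r-1-j}` of the downward recursion:
`P_{r-1} = (-1)^{r-1}` and for `0 ≤ i < r-1`,
`P_i = (-1)^r · ∑_{k=1}^{r-1-i} T_k · P_{k+i}`, where `T_k` is the
variable `MvPolynomial.X k`. -/
noncomputable def Q (r : ℕ) : ℕ → MvPolynomial ℕ ℤ
  | 0 => (-1) ^ (r - 1)
  | (j + 1) => (-1) ^ r * ∑ k ∈ Finset.range (j + 1), MvPolynomial.X (k + 1) * Q r (j - k)
  termination_by j => j
  decreasing_by omega

/-- The polynomial `P_i` in `ℤ[T_1, …, T_{r-1}]`. -/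
noncomputable def P (r i : ℕ) : MvPolynomial ℕ ℤ := Q r (r - 1 - i)

/-- If `t 0 = (-1) ^ (r - 1)`, the values of `Q r` at `t` are the coefficients of the inverse of
the power series with coefficients `t`. -/
theorem sum_aeval_Q_mul {A : Type*} [CommRing A] {r : ℕ} (hr : 1 ≤ r) (t : ℕ → A)
    (ht : t 0 = (-1) ^ (r - 1)) (m : ℕ) :
    ∑ j ∈ Finset.range (m + 1), MvPolynomial.aeval (R := ℤ) t (Q r j) * t (m - j) =
      if m = 0 then 1 else 0 := by
  obtain ⟨r, rfl⟩ := Nat.exists_eq_add_of_le' hr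
  have hsq : ((-1 : A) ^ r) * (-1) ^ r = 1 := by rw [← mul_pow]; simp
  cases m with
  | zero => simpa [Q, ht] using hsq
  | succ m =>
    have hrec : MvPolynomial.aeval (R := ℤ) t (Q (r + 1) (m + 1)) = (-1) ^ (r + 1) *
        ∑ j ∈ Finset.range (m + 1),
          MvPolynomial.aeval (R := ℤ) t (Q (r + 1) j) * t (m + 1 - j) := by
      rw [Q, ← Finset.sum_range_reflect (fun j => _ * t (m + 1 - j))]
      simp only [map_mul, map_pow, map_neg, map_one, map_sum, MvPolynomial.aeval_X]
      congr 1
      refine Finset.sum_congr rfl fun k hk => ?_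
      rw [Finset.mem_range] at hk
      rw [show m + 1 - 1 - k = m - k by omega, show m + 1 - (m - k) = k + 1 by omega, mul_comm]
    rw [Finset.sum_range_succ, hrec, Nat.sub_self, ht, if_neg m.succ_ne_zero,
      Nat.add_sub_cancel, pow_succ]
    linear_combination (-∑ j ∈ Finset.range (m + 1),
      MvPolynomial.aeval (R := ℤ) t (Q (r + 1) j) * t (m + 1 - j)) * hsq

/-- The polynomials `P` invert the Hankel matrix of a sequence `s` that vanishes below `r - 1` and
has `s (r - 1) = (-1) ^ (r - 1)`. -/
theorem sum_aeval_P_mul {A : Type*} [CommRing A] {r : ℕ} (hr : 1 ≤ r) (s : ℕ → A)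
    (hlow : ∀ i < r - 1, s i = 0) (htop : s (r - 1) = (-1) ^ (r - 1)) {i l : ℕ}
    (hi : i ≤ r - 1) (hl : l ≤ r - 1) :
    ∑ j ∈ Finset.range (r - 1 - i + 1),
      MvPolynomial.aeval (R := ℤ) (fun k => s (r - 1 + k)) (P r (i + j)) * s (j + l) =
      if l = i then 1 else 0 := by
  rw [← Finset.sum_range_reflect]
  have hterm : ∀ j ∈ Finset.range (r - 1 - i + 1),
      MvPolynomial.aeval (R := ℤ) (fun k => s (r - 1 + k))
          (P r (i + (r - 1 - i + 1 - 1 - j))) * s (r - 1 - i + 1 - 1 - j + l) =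
        MvPolynomial.aeval (R := ℤ) (fun k => s (r - 1 + k)) (Q r j) *
          s (r - 1 - i - j + l) := by
    intro j hj
    rw [Finset.mem_range] at hj
    rw [P, show r - 1 - (i + (r - 1 - i + 1 - 1 - j)) = j by omega, Nat.add_sub_cancel]
  rw [Finset.sum_congr rfl hterm]
  rcases lt_or_ge l i with hli | hil
  · rw [if_neg hli.ne]
    refine Finset.sum_eq_zero fun j hj => ?_
    rw [hlow _ (by omega), mul_zero]
  · have hsub : Finset.range (l - i + 1) ⊆ Finset.range (r - 1 - i + 1) :=
      Finset.range_subset_range.2 (by omega)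
    rw [← Finset.sum_subset hsub]
    · have hconv := sum_aeval_Q_mul hr (fun k => s (r - 1 + k)) htop (l - i)
      simp only [show l - i = 0 ↔ l = i by omega] at hconv
      rw [← hconv]
      refine Finset.sum_congr rfl fun j hj => ?_
      rw [Finset.mem_range] at hj
      rw [show r - 1 - i - j + l = r - 1 + (l - i - j) by omega]
    · intro j hj hj'
      rw [Finset.mem_range] at hj hj'
      rw [hlow _ (by omega), mul_zero]

/-- Abstract algebraic content of the inverse of the blowup formula
(Theorem 2.4(2)).  With `ψ(α, β_1, …, β_{r-1}) = π^*(α) + ∑_{i=1}^{r-1}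
i_{E*}(h^{i-1}·π_E^*(β_i))`, one has `π_*(ψ(α,β)) = α` and
`G_E^{-i}(i_E^*(ψ(α,β))) = β_i` for `1 ≤ i ≤ r-1`. -/
theorem stmt4 (r : ℕ) (hr : 2 ≤ r)
    {RXt RX RY RE : Type*} [CommRing RXt] [CommRing RX] [CommRing RY] [CommRing RE]
    (πpull : RX →+* RXt) (iEpull : RXt →+* RE) (πEpull : RY →+* RE) (ιpull : RX →+* RY)
    (πpush : RXt →+ RX) (πEpush : RE →+ RY) (iEpush : RE →+ RXt) (ιpush : RY →+ RX)
    (proj : ∀ (a : RX) (b : RXt), πpush (πpull a * b) = a * πpush b)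
    (projE : ∀ (c : RY) (e : RE), πEpush (πEpull c * e) = c * πEpush e)
    (hone : πpush 1 = 1)
    (hcomm : ∀ a : RX, iEpull (πpull a) = πEpull (ιpull a))
    (h : RE)
    (hself : ∀ e : RE, iEpull (iEpush e) = h * e)
    (hpushcomm : ∀ e : RE, πpush (iEpush e) = ιpush (πEpush e))
    (hlow : ∀ i : ℕ, i < r - 1 → πEpush (h ^ i) = 0)
    (htop : πEpush (h ^ (r - 1)) = (-1) ^ (r - 1))
    (α : RX) (β : ℕ → RY) :
    πpush (πpull α + ∑ i ∈ Finset.Icc 1 (r - 1), iEpush (h ^ (i - 1) * πEpull (β i))) = α ∧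
    ∀ i : ℕ, 1 ≤ i → i ≤ r - 1 →
      ∑ j ∈ Finset.range (r - 1 - i + 1),
          MvPolynomial.aeval (R := ℤ) (fun k => πEpush (h ^ (r - 1 + k))) (P r (i + j)) *
            πEpush (h ^ j *
              iEpull (πpull α +
                ∑ l ∈ Finset.Icc 1 (r - 1), iEpush (h ^ (l - 1) * πEpull (β l)))) = β i := by
  have hpush : ∀ (n : ℕ) (c : RY), πEpush (h ^ n * πEpull c) = c * πEpush (h ^ n) :=
    fun n c => by rw [mul_comm, projE]
  refine ⟨?_, fun i hi hir => ?_⟩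
  · have hα : πpush (πpull α) = α := by simpa [hone] using proj α 1
    rw [map_add, hα, map_sum, Finset.sum_eq_zero, add_zero]
    intro l hl
    rw [Finset.mem_Icc] at hl
    rw [hpushcomm, hpush, hlow _ (by omega), mul_zero, map_zero]
  · have hterm : ∀ j ∈ Finset.range (r - 1 - i + 1),
        πEpush (h ^ j * iEpull (πpull α +
          ∑ l ∈ Finset.Icc 1 (r - 1), iEpush (h ^ (l - 1) * πEpull (β l)))) =
        ∑ l ∈ Finset.Icc 1 (r - 1), β l * πEpush (h ^ (j + l)) := by
      intro j hj
      rw [Finset.mem_range] at hj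
      rw [map_add, mul_add, map_add, hcomm, hpush, hlow j (by omega), mul_zero, zero_add,
        map_sum, Finset.mul_sum, map_sum]
      refine Finset.sum_congr rfl fun l hl => ?_
      rw [Finset.mem_Icc] at hl
      rw [hself, ← hpush, ← mul_assoc h, ← pow_succ', Nat.sub_add_cancel hl.1, ← mul_assoc,
        ← pow_add]
    rw [Finset.sum_congr rfl fun j hj => by rw [hterm j hj, Finset.mul_sum], Finset.sum_comm]
    simp_rw [mul_left_comm _ (β _), ← Finset.mul_sum]
    rw [Finset.sum_congr rfl fun l hl => by
      rw [sum_aeval_P_mul (by omega) (fun n => πEpush (h ^ n)) hlow htop hir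
        (Finset.mem_Icc.1 hl).2]]
    simp [hi, hir]
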